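/- arXiv:2104.12716 — 2 statements merged into one kernel-verified Lean document; each statement's English description precedes it below -/
import Mathlib

section
/- Uniform asymptotics of the simple-boundary quadrangulation counting formula: for every compact set K ⊂ (0, ∞) and every η > 0 there exists M ∈ ℕ such that for all integers m ≥ M and ℓ ≥ 1 with ℓ²/m ∈ K one has m − ℓ + 1 ≥ 0 and | Q(m, ℓ) / ( (√3/(2π)) · 12^m · (9/2)^ℓ · m^{−5/2} · ℓ^{1/2} · exp(−9ℓ²/(4m)) ) − 1 | ≤ η. -/
open Filter Topology

/-!
The proof takes logarithms and applies Stirling's formula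
`log n! = n log n - n + ½ log (2πn) + ε(n)`, `ε(n) → 0`, to every factorial. Put `N = 2m + ℓ`,
`A = m - ℓ`, `B = m + 2ℓ`, so that `A + B = N`. The logarithm of the ratio of `Qcount m ℓ` to the
claimed equivalent is then exactly a linear combination of Stirling errors, of logarithms
`log (N/(2m))`, `log (A/m)`, `log (B/m)`, `log ((A+1)/m)`, which vanish because `ℓ/m → 0`, and of
the entropy term `N log N - A log A - B log B - N log 2 + 9ℓ²/(4m)` (`log_ratio_eq`).

With `h = N/2` and `x = 3ℓ/N` one has `A = h(1 - x)`, `B = h(1 + x)`, and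
`(1 - x) log (1 - x) + (1 + x) log (1 + x) = x² + O(x³)` shows that the entropy term is
`O(ℓ³/m²)` (`abs_entropyErr_le`). Since `ℓ²/m` is bounded on `K`, both `ℓ/m` and `ℓ³/m²` tend
to `0`; since it is bounded away from `0`, `ℓ → ∞`. Uniformity is expressed by convergence along
the filter on pairs `(m, ℓ)` generated by `m → ∞` and the constraint `ℓ²/m ∈ K`.
-/

/-- The Bouttier–Guitter counting formula: `Qcount m ℓ` is the number of rooted
quadrangulations with a simple boundary having `m` inner faces and perimeter `2ℓ`
(for `m ≥ 1`, `ℓ ≥ 1` and `m - ℓ + 1 ≥ 0`, i.e. `ℓ ≤ m + 1`; note that in this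
regime the natural subtraction `m + 1 - ℓ` agrees with `m - ℓ + 1`). -/
noncomputable def Qcount (m ℓ : ℕ) : ℝ :=
  (3:ℝ) ^ (-(ℓ:ℤ)) * (Nat.factorial (3*ℓ)) / ((Nat.factorial ℓ) * (Nat.factorial (2*ℓ - 1)))
    * (3:ℝ) ^ m * (Nat.factorial (2*m + ℓ - 1))
    / ((Nat.factorial (m + 1 - ℓ)) * (Nat.factorial (m + 2*ℓ)))

/-- The error `log n! - (n log n - n + ½ log (2πn))` in Stirling's formula. -/
noncomputable def stirlingErr (n : ℕ) : ℝ :=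
  Real.log (n.factorial) - (n * Real.log n - n + (Real.log 2 + Real.log Real.pi + Real.log n) / 2)

lemma tendsto_stirlingErr : Tendsto stirlingErr atTop (𝓝 0) := by
  have h1 : Tendsto (fun n => Real.log (Stirling.stirlingSeq n)) atTop
      (𝓝 (Real.log (Real.sqrt Real.pi))) :=
    Stirling.tendsto_stirlingSeq_sqrt_pi.log (by positivity)
  have h2 := h1.sub_const (Real.log (Real.sqrt Real.pi))
  rw [sub_self] at h2
  refine h2.congr' ?_
  filter_upwards [eventually_ge_atTop 1] with n hn
  have hn' : (n : ℝ) ≠ 0 := by positivity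
  rw [Stirling.log_stirlingSeq_formula, Real.log_sqrt Real.pi_pos.le,
    Real.log_mul two_ne_zero hn', Real.log_div hn' (Real.exp_pos 1).ne', Real.log_exp, stirlingErr]
  ring

/-- Second-order expansion of the binary entropy function at the fair coin. -/
lemma abs_entropy_sub_sq_le {x : ℝ} (hx0 : 0 ≤ x) (hx : x ≤ 1 / 2) :
    |(1 - x) * Real.log (1 - x) + (1 + x) * Real.log (1 + x) - x ^ 2| ≤ 4 * x ^ 3 := by
  have hx1 : |x| < 1 := by rw [abs_of_nonneg hx0]; linarith
  have h1 := Real.abs_log_sub_add_sum_range_le hx1 2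
  have h2 := Real.abs_log_sub_add_sum_range_le (x := -x) (by rwa [abs_neg]) 2
  simp only [Finset.sum_range_succ, Finset.sum_range_zero, abs_neg, abs_of_nonneg hx0,
    sub_neg_eq_add] at h1 h2
  norm_num at h1 h2
  have h3 : x ^ 3 / (1 - x) ≤ 2 * x ^ 3 := by
    rw [div_le_iff₀ (by linarith)]
    nlinarith [pow_nonneg hx0 3]
  rw [abs_le] at h1 h2 ⊢
  obtain ⟨a1, a2⟩ := h1
  obtain ⟨b1, b2⟩ := h2
  have c1 : 0 ≤ 1 - x := by linarith
  have c2 : 0 ≤ 1 + x := by linarith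
  have p1 := mul_le_mul_of_nonneg_left (a2.trans h3) c1
  have p2 := mul_le_mul_of_nonneg_left (b2.trans h3) c2
  have p3 := mul_le_mul_of_nonneg_left ((neg_le_neg h3).trans a1) c1
  have p4 := mul_le_mul_of_nonneg_left ((neg_le_neg h3).trans b1) c2
  constructor <;> nlinarith

/-- The deviation of `log (N^N / (A^A B^B))` from its Gaussian approximation
`N log 2 - 9ℓ²/(4m)`, where `N = 2m + ℓ`, `A = m - ℓ`, `B = m + 2ℓ`. -/
noncomputable def entropyErr (m ℓ : ℝ) : ℝ :=
  (2 * m + ℓ) * Real.log (2 * m + ℓ) - (m - ℓ) * Real.log (m - ℓ)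
    - (m + 2 * ℓ) * Real.log (m + 2 * ℓ) - (2 * m + ℓ) * Real.log 2 + 9 * ℓ ^ 2 / (4 * m)

lemma abs_entropyErr_le {m ℓ : ℝ} (hm : 0 < m) (hℓ : 0 ≤ ℓ) (h : 4 * ℓ ≤ m) :
    |entropyErr m ℓ| ≤ 20 * (ℓ ^ 3 / m ^ 2) := by
  have hN : 0 < 2 * m + ℓ := by linarith
  obtain ⟨x, hx⟩ : ∃ x, x = 3 * ℓ / (2 * m + ℓ) := ⟨_, rfl⟩
  have hx0 : 0 ≤ x := by rw [hx]; positivity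
  have hx2 : x ≤ 1 / 2 := by rw [hx, div_le_iff₀ hN]; linarith
  have hA : m - ℓ = (2 * m + ℓ) / 2 * (1 - x) := by rw [hx]; field_simp; ring
  have hB : m + 2 * ℓ = (2 * m + ℓ) / 2 * (1 + x) := by rw [hx]; field_simp; ring
  have lA : Real.log (m - ℓ) = Real.log (2 * m + ℓ) - Real.log 2 + Real.log (1 - x) := by
    rw [hA, Real.log_mul (by positivity) (by linarith), Real.log_div hN.ne' two_ne_zero]
  have lB : Real.log (m + 2 * ℓ) = Real.log (2 * m + ℓ) - Real.log 2 + Real.log (1 + x) := by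
    rw [hB, Real.log_mul (by positivity) (by linarith), Real.log_div hN.ne' two_ne_zero]
  have e2 : 9 * ℓ ^ 2 / (4 * m) - (2 * m + ℓ) / 2 * x ^ 2
      = 9 * ℓ ^ 3 / (2 * m * (2 * (2 * m + ℓ))) := by
    rw [hx]; field_simp; ring
  have key : entropyErr m ℓ =
      -((2 * m + ℓ) / 2 * ((1 - x) * Real.log (1 - x) + (1 + x) * Real.log (1 + x) - x ^ 2))
        + 9 * ℓ ^ 3 / (2 * m * (2 * (2 * m + ℓ))) := by
    rw [← e2, entropyErr, lA, lB]
    have : (m - ℓ) * Real.log (1 - x) = (2 * m + ℓ) / 2 * (1 - x) * Real.log (1 - x) := by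
      rw [← hA]
    have : (m + 2 * ℓ) * Real.log (1 + x) = (2 * m + ℓ) / 2 * (1 + x) * Real.log (1 + x) := by
      rw [← hB]
    linarith
  have b1 := mul_le_mul_of_nonneg_left (abs_entropy_sub_sq_le hx0 hx2)
    (show 0 ≤ (2 * m + ℓ) / 2 by positivity)
  have b2 : (2 * m + ℓ) / 2 * (4 * x ^ 3) ≤ 54 / 4 * (ℓ ^ 3 / m ^ 2) := by
    have : (2 * m + ℓ) / 2 * (4 * x ^ 3) = 54 * ℓ ^ 3 / (2 * m + ℓ) ^ 2 := by
      rw [hx]; field_simp; ring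
    rw [this, show 54 / 4 * (ℓ ^ 3 / m ^ 2) = 54 * ℓ ^ 3 / (2 * m) ^ 2 by field_simp; ring]
    gcongr
    linarith
  have b3 : 9 * ℓ ^ 3 / (2 * m * (2 * (2 * m + ℓ))) ≤ 9 / 8 * (ℓ ^ 3 / m ^ 2) := by
    rw [show 9 / 8 * (ℓ ^ 3 / m ^ 2) = 9 * ℓ ^ 3 / (2 * m * (2 * (2 * m))) by field_simp; ring]
    gcongr
    linarith
  have b4 : 0 ≤ 9 * ℓ ^ 3 / (2 * m * (2 * (2 * m + ℓ))) := by positivity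
  have b5 : 0 ≤ ℓ ^ 3 / m ^ 2 := by positivity
  rw [key]
  refine (abs_add_le _ _).trans ?_
  rw [abs_neg, abs_mul, abs_of_nonneg (show 0 ≤ (2 * m + ℓ) / 2 by positivity), abs_of_nonneg b4]
  linarith

/-- The claimed equivalent of `Qcount m ℓ`. -/
noncomputable def Qapprox (m ℓ : ℕ) : ℝ :=
  (Real.sqrt 3 / (2 * Real.pi)) * (12:ℝ)^m * ((9:ℝ)/2)^ℓ *
    (m:ℝ) ^ (-(5:ℝ)/2) * Real.sqrt ℓ * Real.exp (-(9 * (ℓ:ℝ)^2) / (4*m))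

lemma log_Qapprox {m ℓ : ℕ} (hm : 0 < m) (hℓ : 0 < ℓ) :
    Real.log (Qapprox m ℓ) = Real.log 3 / 2 - Real.log 2 - Real.log Real.pi
      + m * (2 * Real.log 2 + Real.log 3) + ℓ * (2 * Real.log 3 - Real.log 2)
      - 5 / 2 * Real.log m + Real.log ℓ / 2 - 9 * (ℓ:ℝ) ^ 2 / (4 * m) := by
  have hm' : (0:ℝ) < m := by exact_mod_cast hm
  have hℓ' : (0:ℝ) < ℓ := by exact_mod_cast hℓ
  have hpi := Real.pi_pos
  have l12 : Real.log 12 = 2 * Real.log 2 + Real.log 3 := by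
    rw [show (12:ℝ) = 2 ^ 2 * 3 by norm_num, Real.log_mul (by norm_num) (by norm_num),
      Real.log_pow]
    norm_num
  have l9 : Real.log 9 = 2 * Real.log 3 := by
    rw [show (9:ℝ) = 3 ^ 2 by norm_num, Real.log_pow]
    norm_num
  rw [Qapprox, Real.log_mul (by positivity) (by positivity),
    Real.log_mul (by positivity) (by positivity), Real.log_mul (by positivity) (by positivity),
    Real.log_mul (by positivity) (by positivity), Real.log_mul (by positivity) (by positivity),
    Real.log_div (by positivity) (by positivity), Real.log_mul (by positivity) (by positivity),
    Real.log_exp, Real.log_sqrt (by positivity), Real.log_sqrt (by positivity), Real.log_pow,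
    Real.log_pow, Real.log_rpow hm', Real.log_div (by norm_num) (by norm_num), l12, l9]
  ring

/-- The shifted factorials are rewritten as `(2ℓ-1)! = (2ℓ)!/(2ℓ)`, `(2m+ℓ-1)! = N!/N` and
`(m+1-ℓ)! = (A+1)·A!`. -/
lemma log_Qcount {m ℓ : ℕ} (hm : 0 < m) (hℓ : 0 < ℓ) (h : ℓ ≤ m) :
    Real.log (Qcount m ℓ) = -(ℓ * Real.log 3) + Real.log ((3 * ℓ).factorial)
      - Real.log (ℓ.factorial) - Real.log ((2 * ℓ).factorial) + Real.log 2 + Real.log ℓ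
      + m * Real.log 3 + Real.log ((2 * m + ℓ).factorial) - Real.log (2 * m + ℓ)
      - Real.log ((m - ℓ).factorial) - Real.log (m - ℓ + 1)
      - Real.log ((m + 2 * ℓ).factorial) := by
  have hm' : (0:ℝ) < m := by exact_mod_cast hm
  have hℓ' : (0:ℝ) < ℓ := by exact_mod_cast hℓ
  have hA : (0:ℝ) ≤ m - ℓ := sub_nonneg.2 (by exact_mod_cast h)
  have f : ∀ n : ℕ, ((n.factorial : ℕ) : ℝ) ≠ 0 := fun n => by positivity
  have f1 : Real.log ((2 * ℓ).factorial) =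
      Real.log 2 + Real.log ℓ + Real.log ((2 * ℓ - 1).factorial) := by
    rw [← Nat.mul_factorial_pred (show 2 * ℓ ≠ 0 by omega)]
    push_cast
    rw [Real.log_mul (by positivity) (f _), Real.log_mul (by positivity) (by positivity)]
  have f2 : Real.log ((2 * m + ℓ).factorial) =
      Real.log (2 * m + ℓ) + Real.log ((2 * m + ℓ - 1).factorial) := by
    rw [← Nat.mul_factorial_pred (show 2 * m + ℓ ≠ 0 by omega)]
    push_cast
    rw [Real.log_mul (by positivity) (f _)]
  have f3 : Real.log ((m + 1 - ℓ).factorial) =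
      Real.log (m - ℓ + 1) + Real.log ((m - ℓ).factorial) := by
    rw [show m + 1 - ℓ = (m - ℓ) + 1 by omega, Nat.factorial_succ]
    push_cast [Nat.cast_sub h]
    rw [Real.log_mul (by positivity) (f _)]
  rw [Qcount, Real.log_div (by positivity) (by positivity),
    Real.log_mul (by positivity) (by positivity), Real.log_mul (by positivity) (by positivity),
    Real.log_div (by positivity) (by positivity), Real.log_mul (by positivity) (by positivity),
    Real.log_mul (by positivity) (by positivity), Real.log_mul (by positivity) (by positivity),
    Real.log_zpow, Real.log_pow, f1, f2, f3]
  push_cast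
  ring

lemma log_ratio_eq {m ℓ : ℕ} (hm : 0 < m) (hℓ : 0 < ℓ) (h : ℓ < m) :
    Real.log (Qcount m ℓ) - Real.log (Qapprox m ℓ) =
      stirlingErr (3 * ℓ) - stirlingErr ℓ - stirlingErr (2 * ℓ)
      + stirlingErr (2 * m + ℓ) - stirlingErr (m - ℓ) - stirlingErr (m + 2 * ℓ)
      - Real.log (1 + ℓ / m / 2) / 2 - Real.log (1 - ℓ / m) / 2
      - Real.log (1 + 2 * (ℓ / m)) / 2 - Real.log (1 - ℓ / m + 1 / m) + entropyErr m ℓ := by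
  have hm' : (0:ℝ) < m := by exact_mod_cast hm
  have hℓ' : (0:ℝ) < ℓ := by exact_mod_cast hℓ
  have hA : (0:ℝ) < m - ℓ := sub_pos.2 (by exact_mod_cast h)
  have u1 : Real.log (1 + ℓ / m / 2) = Real.log (2 * m + ℓ) - Real.log m - Real.log 2 := by
    rw [← Real.log_div (by positivity) (by positivity),
      ← Real.log_div (by positivity) (by positivity)]
    congr 1; field_simp
  have u2 : Real.log (1 - ℓ / m) = Real.log (m - ℓ) - Real.log m := by
    rw [← Real.log_div (by positivity) (by positivity)]
    congr 1; field_simp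
  have u3 : Real.log (1 + 2 * (ℓ / m)) = Real.log (m + 2 * ℓ) - Real.log m := by
    rw [← Real.log_div (by positivity) (by positivity)]
    congr 1; field_simp
  have u4 : Real.log (1 - ℓ / m + 1 / m) = Real.log (m - ℓ + 1) - Real.log m := by
    rw [← Real.log_div (by positivity) (by positivity)]
    congr 1; field_simp
  rw [log_Qcount hm hℓ h.le, log_Qapprox hm hℓ, u1, u2, u3, u4]
  simp only [stirlingErr, entropyErr]
  push_cast [Nat.cast_sub h.le]
  rw [Real.log_mul (show (3:ℝ) ≠ 0 by norm_num) hℓ'.ne',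
    Real.log_mul (show (2:ℝ) ≠ 0 by norm_num) hℓ'.ne']
  ring

lemma tendsto_ratio {F : Filter (ℕ × ℕ)} (hm : Tendsto (fun p : ℕ × ℕ => p.1) F atTop)
    (hℓ : Tendsto (fun p : ℕ × ℕ => p.2) F atTop)
    (ht : Tendsto (fun p : ℕ × ℕ => (p.2 : ℝ) / p.1) F (𝓝 0))
    (ht3 : Tendsto (fun p : ℕ × ℕ => (p.2 : ℝ) ^ 3 / (p.1 : ℝ) ^ 2) F (𝓝 0)) :
    Tendsto (fun p : ℕ × ℕ => Qcount p.1 p.2 / Qapprox p.1 p.2) F (𝓝 1) := by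
  have hmR : Tendsto (fun p : ℕ × ℕ => (p.1 : ℝ)) F atTop :=
    tendsto_natCast_atTop_atTop.comp hm
  have hinv : Tendsto (fun p : ℕ × ℕ => 1 / (p.1 : ℝ)) F (𝓝 0) := by
    simpa using hmR.const_div_atTop 1
  have hsmall : ∀ᶠ p in F, 0 < p.1 ∧ 0 < p.2 ∧ 4 * p.2 ≤ p.1 := by
    filter_upwards [hm.eventually_gt_atTop 0, hℓ.eventually_gt_atTop 0,
      ht.eventually_lt_const (show (0:ℝ) < 1 / 4 by norm_num)] with p h1 h2 h3
    refine ⟨h1, h2, ?_⟩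
    have h1' : (0:ℝ) < p.1 := by exact_mod_cast h1
    rw [div_lt_iff₀ h1'] at h3
    have : (4:ℝ) * p.2 ≤ p.1 := by linarith
    exact_mod_cast this
  have hE : Tendsto (fun p : ℕ × ℕ => entropyErr p.1 p.2) F (𝓝 0) := by
    have h20 := ht3.const_mul 20
    rw [mul_zero] at h20
    refine squeeze_zero_norm' ?_ h20
    filter_upwards [hsmall] with p hp
    exact abs_entropyErr_le (by exact_mod_cast hp.1) (by positivity) (by exact_mod_cast hp.2.2)
  have hS : ∀ g : ℕ × ℕ → ℕ, Tendsto g F atTop →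
      Tendsto (fun p => stirlingErr (g p)) F (𝓝 0) := fun g hg => tendsto_stirlingErr.comp hg
  have s1 := hS (fun p => 3 * p.2) (tendsto_atTop_mono (fun p => by omega) hℓ)
  have s2 := hS (fun p => p.2) hℓ
  have s3 := hS (fun p => 2 * p.2) (tendsto_atTop_mono (fun p => by omega) hℓ)
  have s4 := hS (fun p => 2 * p.1 + p.2) (tendsto_atTop_mono (fun p => by omega) hℓ)
  have s5 := hS (fun p => p.1 - p.2) (by
    refine tendsto_atTop_mono' F ?_ hℓ
    filter_upwards [hsmall] with p hp
    omega)
  have s6 := hS (fun p => p.1 + 2 * p.2) (tendsto_atTop_mono (fun p => by omega) hm)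
  have hL : ∀ g : ℕ × ℕ → ℝ, Tendsto g F (𝓝 1) →
      Tendsto (fun p => Real.log (g p)) F (𝓝 0) := fun g hg => by
    simpa using hg.log one_ne_zero
  have l1 := hL (fun p => 1 + p.2 / p.1 / 2) (by simpa using (ht.div_const 2).const_add 1)
  have l2 := hL (fun p => 1 - p.2 / p.1) (by simpa using ht.const_sub 1)
  have l3 := hL (fun p => 1 + 2 * (p.2 / p.1)) (by simpa using (ht.const_mul 2).const_add 1)
  have l4 := hL (fun p => 1 - p.2 / p.1 + 1 / p.1) (by simpa using (ht.const_sub 1).add hinv)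
  have key := ((((((((((s1.sub s2).sub s3).add s4).sub s5).sub s6).sub (l1.div_const 2)).sub
    (l2.div_const 2)).sub (l3.div_const 2)).sub l4).add hE).rexp
  norm_num only [Real.exp_zero] at key
  refine key.congr' ?_
  filter_upwards [hsmall] with p hp
  obtain ⟨h1, h2, h3⟩ := hp
  rw [← log_ratio_eq h1 h2 (by omega)]
  have hpi := Real.pi_pos
  have hQ : 0 < Qcount p.1 p.2 := by rw [Qcount]; positivity
  have hA : 0 < Qapprox p.1 p.2 := by
    have h1' : (0:ℝ) < p.1 := by exact_mod_cast h1
    have h2' : (0:ℝ) < p.2 := by exact_mod_cast h2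
    rw [Qapprox]; positivity
  rw [Real.exp_sub, Real.exp_log hQ, Real.exp_log hA]

/-- Uniform asymptotics of the simple-boundary quadrangulation counting formula: as
`m, ℓ → ∞` with `ℓ²/m` staying in a compact subset of `(0,∞)`,
`Qcount m ℓ ∼ (√3/(2π)) · 12^m · (9/2)^ℓ · m^{-5/2} · ℓ^{1/2} · exp(-9ℓ²/(4m))`,
uniformly. -/
theorem Qcount_asymptotics (K : Set ℝ) (hK : IsCompact K) (hK' : K ⊆ Set.Ioi 0)
    {η : ℝ} (hη : 0 < η) :
    ∃ M : ℕ, ∀ m ℓ : ℕ, M ≤ m → 1 ≤ ℓ → (ℓ:ℝ)^2 / m ∈ K →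
      ℓ ≤ m + 1 ∧
      |Qcount m ℓ /
          ((Real.sqrt 3 / (2 * Real.pi)) * (12:ℝ)^m * ((9:ℝ)/2)^ℓ *
            (m:ℝ) ^ (-(5:ℝ)/2) * Real.sqrt ℓ * Real.exp (-(9 * (ℓ:ℝ)^2) / (4*m)))
        - 1| ≤ η := by
  obtain ⟨a, ha, haK⟩ : ∃ a : ℝ, 0 < a ∧ ∀ x ∈ K, a ≤ x := by
    rcases K.eq_empty_or_nonempty with rfl | hne
    · exact ⟨1, one_pos, by simp⟩
    · obtain ⟨a, haK, hmin⟩ := hK.exists_isLeast hne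
      exact ⟨a, hK' haK, fun x hx => hmin hx⟩
  obtain ⟨b, hb⟩ := hK.bddAbove
  obtain ⟨F, hF⟩ : ∃ F : Filter (ℕ × ℕ), F = comap (fun p : ℕ × ℕ => p.1) atTop ⊓
      𝓟 {p : ℕ × ℕ | (p.2 : ℝ) ^ 2 / p.1 ∈ K} := ⟨_, rfl⟩
  have hm : Tendsto (fun p : ℕ × ℕ => p.1) F atTop := by
    rw [hF]; exact tendsto_comap.mono_left inf_le_left
  have hmR : Tendsto (fun p : ℕ × ℕ => (p.1 : ℝ)) F atTop :=
    tendsto_natCast_atTop_atTop.comp hm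
  have hmem : ∀ᶠ p in F, (p.2 : ℝ) ^ 2 / p.1 ∈ K := by
    rw [hF]; exact mem_inf_of_right (mem_principal_self _)
  have hℓ : Tendsto (fun p : ℕ × ℕ => p.2) F atTop := by
    rw [← tendsto_natCast_atTop_iff (R := ℝ)]
    have h1 : Tendsto (fun p : ℕ × ℕ => Real.sqrt (a * p.1)) F atTop :=
      Real.tendsto_sqrt_atTop.comp (hmR.const_mul_atTop ha)
    refine tendsto_atTop_mono' F ?_ h1
    filter_upwards [hmem, hmR.eventually_gt_atTop 0] with p hp hp0
    have := haK _ hp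
    rw [le_div_iff₀ hp0] at this
    exact Real.sqrt_le_iff.2 ⟨by positivity, this⟩
  have ht : Tendsto (fun p : ℕ × ℕ => (p.2 : ℝ) / p.1) F (𝓝 0) := by
    have h1 : Tendsto (fun p : ℕ × ℕ => Real.sqrt (b / p.1)) F (𝓝 0) := by
      simpa using (hmR.const_div_atTop b).sqrt
    refine squeeze_zero' (Eventually.of_forall fun p => by positivity) ?_ h1
    filter_upwards [hmem, hmR.eventually_gt_atTop 0] with p hp hp0
    apply Real.le_sqrt_of_sq_le
    rw [show ((p.2 : ℝ) / p.1) ^ 2 = (p.2 : ℝ) ^ 2 / p.1 / p.1 by field_simp]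
    have := hb hp
    gcongr
  have ht3 : Tendsto (fun p : ℕ × ℕ => (p.2 : ℝ) ^ 3 / (p.1 : ℝ) ^ 2) F (𝓝 0) := by
    have h1 := ht.const_mul b
    rw [mul_zero] at h1
    refine squeeze_zero' (Eventually.of_forall fun p => by positivity) ?_ h1
    filter_upwards [hmem, hmR.eventually_gt_atTop 0] with p hp hp0
    rw [show (p.2 : ℝ) ^ 3 / (p.1 : ℝ) ^ 2 = (p.2 : ℝ) ^ 2 / p.1 * (p.2 / p.1) by field_simp]
    have := hb hp
    gcongr
  have hlim := (tendsto_ratio hm hℓ ht ht3).eventually (Metric.closedBall_mem_nhds 1 hη)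
  have hle := ht.eventually_lt_const one_pos
  have hall := (hlim.and hle).and (hm.eventually_gt_atTop 0)
  rw [hF, eventually_inf_principal, eventually_comap] at hall
  obtain ⟨M, hM⟩ := eventually_atTop.1 hall
  refine ⟨M, fun m ℓ hMm _ hmK => ?_⟩
  obtain ⟨⟨h1, h2⟩, h3⟩ := hM m hMm (m, ℓ) rfl hmK
  have h3' : (0:ℝ) < m := by exact_mod_cast h3
  refine ⟨?_, h1⟩
  rw [div_lt_one h3'] at h2
  have : ℓ < m := by exact_mod_cast h2
  omega
end

section
/- Stirling asymptotics for the bulk factor of the counting formula: for every compact set K ⊂ (0, ∞) and every η > 0 there exists M ∈ ℕ such that for all integers m ≥ M and ℓ ≥ 1 with ℓ²/m ∈ K one has m − ℓ + 1 ≥ 0 and | ( (2m+ℓ−1)! / ((m−ℓ+1)! · (m+2ℓ)!) ) / ( (1/(2√π)) · 4^m · 2^ℓ · m^{−5/2} · exp(−9ℓ²/(4m)) ) − 1 | ≤ η. -/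
/-!
Write `N = 2m + ℓ`, `a = m - ℓ`, `b = m + 2ℓ`, so that `N = a + b` and the bulk factor is
`N! / (a! b!) / (N (a + 1))`. Put `x = ℓ / m` and expand each factorial as
`log n! = log (stirlingSeq n) + log (2n) / 2 + n log n - n`. All powers of `m`, `2` and `e`
match those of the claimed equivalent, and the logarithm of the quotient is exactly
`logError m ℓ` (`bulk_ratio_eq_exp`). It consists of Stirling corrections, which cancel in the
limit because `stirlingSeq n → √π`; of logarithms of quantities tending to `1`; and of
`m * (g x + 9 x² / 4)`, where `g` is a combination of entropy terms `(1 + u) log (1 + u)`.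
By the Taylor bound `abs_entropy_sub_le` the last term is `O(m |x|³) = O((ℓ² / m) x)`, and
`x → 0` because `ℓ² / m` is bounded on `K`. Uniformity in `ℓ` is obtained by taking
the limit along the filter of pairs `(m, ℓ)` with `m → ∞` and `ℓ² / m ∈ K`.
-/

open Filter Topology

/-- The logarithm of the quotient of the bulk factor by its claimed equivalent
(see `bulk_ratio_eq_exp`), arranged in three groups that each tend to `0`. -/
noncomputable def logError (m ℓ : ℕ) : ℝ :=
  (Real.log (Stirling.stirlingSeq (2 * m + ℓ)) - Real.log (Stirling.stirlingSeq (m - ℓ))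
      - Real.log (Stirling.stirlingSeq (m + 2 * ℓ)) + Real.log (Real.sqrt Real.pi))
    + (-(1 / 2) * Real.log (1 + (ℓ / m : ℝ) / 2) - 1 / 2 * Real.log (1 + -(ℓ / m : ℝ))
      - 1 / 2 * Real.log (1 + 2 * (ℓ / m : ℝ)) - Real.log (1 + -(ℓ / m : ℝ) + 1 / (m : ℝ)))
    + m * (2 * ((1 + (ℓ / m : ℝ) / 2) * Real.log (1 + (ℓ / m : ℝ) / 2))
      - (1 + -(ℓ / m : ℝ)) * Real.log (1 + -(ℓ / m : ℝ))
      - (1 + 2 * (ℓ / m : ℝ)) * Real.log (1 + 2 * (ℓ / m : ℝ)) + 9 / 4 * (ℓ / m : ℝ) ^ 2)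

lemma abs_entropy_sub_le {u : ℝ} (hu : |u| ≤ 1 / 2) :
    |(1 + u) * Real.log (1 + u) - u - u ^ 2 / 2| ≤ 4 * |u| ^ 3 := by
  have h := Real.abs_log_sub_add_sum_range_le (x := -u) (by rw [abs_neg]; linarith) 2
  simp only [Finset.sum_range_succ, Finset.sum_range_zero, abs_neg, sub_neg_eq_add] at h
  norm_num at h
  set e := -u + u ^ 2 / 2 + Real.log (1 + u) with he
  have h3 : 0 ≤ |u| ^ 3 := by positivity
  have he' : |e| ≤ 2 * |u| ^ 3 := by
    refine h.trans ?_
    rw [div_le_iff₀ (by linarith)]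
    nlinarith
  have hid : (1 + u) * Real.log (1 + u) - u - u ^ 2 / 2 = (1 + u) * e - u ^ 3 / 2 := by
    rw [he]; ring
  rw [hid]
  have h1 : |1 + u| ≤ 3 / 2 := by
    rw [abs_le] at hu ⊢; constructor <;> linarith [hu.1, hu.2]
  calc |(1 + u) * e - u ^ 3 / 2| ≤ |(1 + u) * e| + |u ^ 3 / 2| := abs_sub _ _
    _ = |1 + u| * |e| + |u| ^ 3 / 2 := by rw [abs_mul, abs_div, abs_pow]; norm_num
    _ ≤ 3 / 2 * (2 * |u| ^ 3) + |u| ^ 3 / 2 := by gcongr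
    _ ≤ 4 * |u| ^ 3 := by linarith

lemma log_factorial_eq {n : ℕ} (hn : 0 < n) :
    Real.log (n.factorial : ℝ) = Real.log (Stirling.stirlingSeq n)
      + 1 / 2 * (Real.log 2 + Real.log n) + n * Real.log n - n := by
  have hn' : (n : ℝ) ≠ 0 := by positivity
  rw [Stirling.log_stirlingSeq_formula, Real.log_mul two_ne_zero hn',
    Real.log_div hn' (Real.exp_ne_zero _), Real.log_exp]
  ring

lemma bulk_ratio_eq_exp {m ℓ : ℕ} (hl : 1 ≤ ℓ) (hlm : ℓ < m) :
    (((Nat.factorial (2*m + ℓ - 1)) : ℝ)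
            / ((Nat.factorial (m + 1 - ℓ)) * (Nat.factorial (m + 2*ℓ))))
          / ((1 / (2 * Real.sqrt Real.pi)) * (4:ℝ)^m * (2:ℝ)^ℓ *
              (m:ℝ) ^ (-(5:ℝ)/2) * Real.exp (-(9 * (ℓ:ℝ)^2) / (4*m)))
      = Real.exp (logError m ℓ) := by
  have hm : (0 : ℝ) < m := by exact_mod_cast (by omega : 0 < m)
  have hlm' : (ℓ : ℝ) < m := by exact_mod_cast hlm
  have hl' : (0 : ℝ) < ℓ := by exact_mod_cast hl
  have hpi : 0 < Real.sqrt Real.pi := Real.sqrt_pos.2 Real.pi_pos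
  rw [← Real.exp_log (x := _ / _) (by positivity)]
  congr 1
  have hN : ((2 * m + ℓ).factorial : ℝ) = (2 * m + ℓ) * ((2 * m + ℓ - 1).factorial : ℝ) := by
    rw [← Nat.mul_factorial_pred (by omega : 2 * m + ℓ ≠ 0)]; push_cast; ring
  have ha : ((m + 1 - ℓ).factorial : ℝ) = (m - ℓ + 1) * ((m - ℓ).factorial : ℝ) := by
    rw [show m + 1 - ℓ = (m - ℓ) + 1 by omega, Nat.factorial_succ]
    push_cast [Nat.cast_sub hlm.le]; ring
  have ha1 : (0 : ℝ) < m - ℓ + 1 := by linarith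
  have lN : Real.log ((2 * m + ℓ - 1).factorial : ℝ)
      = Real.log ((2 * m + ℓ).factorial : ℝ) - Real.log (2 * m + ℓ) := by
    rw [hN, Real.log_mul (by positivity) (by positivity)]; ring
  have la : Real.log ((m + 1 - ℓ).factorial : ℝ)
      = Real.log (m - ℓ + 1) + Real.log ((m - ℓ).factorial : ℝ) := by
    rw [ha, Real.log_mul (by positivity) (by positivity)]
  have hx : (0 : ℝ) < 1 + -(ℓ / m : ℝ) := by
    have : (ℓ / m : ℝ) < 1 := (div_lt_one hm).2 hlm'
    linarith
  have e1 : Real.log (2 * m + ℓ)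
      = Real.log 2 + Real.log m + Real.log (1 + (ℓ / m : ℝ) / 2) := by
    rw [← Real.log_mul (by positivity) (by positivity),
      ← Real.log_mul (by positivity) (by positivity)]
    congr 1; field_simp
  have e2 : Real.log (m - ℓ) = Real.log m + Real.log (1 + -(ℓ / m : ℝ)) := by
    rw [← Real.log_mul (by positivity) (by positivity)]
    congr 1; field_simp; ring
  have e3 : Real.log (m + 2 * ℓ) = Real.log m + Real.log (1 + 2 * (ℓ / m : ℝ)) := by
    rw [← Real.log_mul (by positivity) (by positivity)]
    congr 1; field_simp
  have e4 : Real.log (m - ℓ + 1)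
      = Real.log m + Real.log (1 + -(ℓ / m : ℝ) + 1 / (m : ℝ)) := by
    rw [← Real.log_mul (by positivity) (by positivity)]
    congr 1; field_simp; ring
  have l4 : Real.log 4 = 2 * Real.log 2 := by
    rw [show (4 : ℝ) = 2 ^ 2 by norm_num, Real.log_pow]; norm_num
  rw [Real.log_div (by positivity) (by positivity), Real.log_div (by positivity) (by positivity),
    Real.log_mul (by positivity) (by positivity), Real.log_mul (by positivity) (by positivity),
    Real.log_mul (by positivity) (by positivity), Real.log_mul (by positivity) (by positivity),
    Real.log_mul (by positivity) (by positivity), Real.log_exp, Real.log_rpow hm,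
    Real.log_pow, Real.log_pow, Real.log_div one_ne_zero (by positivity), Real.log_one,
    Real.log_mul (by positivity) (by positivity), lN, la,
    log_factorial_eq (by omega : 0 < 2 * m + ℓ), log_factorial_eq (by omega : 0 < m - ℓ),
    log_factorial_eq (by omega : 0 < m + 2 * ℓ)]
  push_cast [Nat.cast_sub hlm.le]
  rw [e1, e2, e3, e4, l4]
  unfold logError
  field_simp
  ring

/-- Only an upper bound on `ℓ² / m` enters: it forces `ℓ / m → 0`, hence both `ℓ < m` eventually
and the decay of the three groups of terms in `logError`. -/
lemma tendsto_logError {F : Filter (ℕ × ℕ)} {C : ℝ} (hm : Tendsto Prod.fst F atTop)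
    (hC : ∀ᶠ p : ℕ × ℕ in F, (p.2 : ℝ) ^ 2 / p.1 ≤ C) :
    (∀ᶠ p : ℕ × ℕ in F, p.2 < p.1) ∧ Tendsto (fun p : ℕ × ℕ => logError p.1 p.2) F (𝓝 0) := by
  have hm' : Tendsto (fun p : ℕ × ℕ => (p.1 : ℝ)) F atTop :=
    tendsto_natCast_atTop_atTop.comp hm
  have hinv : Tendsto (fun p : ℕ × ℕ => 1 / (p.1 : ℝ)) F (𝓝 0) := by
    simpa [Function.comp_def] using tendsto_inv_atTop_zero.comp hm'
  have hx2 : Tendsto (fun p : ℕ × ℕ => (p.2 / p.1 : ℝ) ^ 2) F (𝓝 0) := by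
    refine squeeze_zero' (Eventually.of_forall fun p => by positivity) ?_
      (by simpa using hinv.const_mul C)
    filter_upwards [hC] with p hp
    calc (p.2 / p.1 : ℝ) ^ 2 = (p.2 : ℝ) ^ 2 / p.1 * (1 / p.1) := by
          rw [div_pow, sq (p.1 : ℝ), ← div_div, mul_one_div]
      _ ≤ C * (1 / p.1) := by gcongr
      _ = _ := by simp
  have hx : Tendsto (fun p : ℕ × ℕ => (p.2 / p.1 : ℝ)) F (𝓝 0) := by
    have h := hx2.sqrt
    rw [Real.sqrt_zero] at h
    exact h.congr fun p => Real.sqrt_sq (by positivity)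
  have hsmall : ∀ᶠ p : ℕ × ℕ in F, (p.2 / p.1 : ℝ) ≤ 1 / 4 :=
    hx.eventually_le_const (by norm_num)
  have hm0 : ∀ᶠ p : ℕ × ℕ in F, 0 < p.1 := hm.eventually_gt_atTop 0
  have h4 : ∀ᶠ p : ℕ × ℕ in F, 4 * p.2 ≤ p.1 := by
    filter_upwards [hsmall, hm0] with p hp h0
    have h0' : (0 : ℝ) < p.1 := by exact_mod_cast h0
    rw [div_le_iff₀ h0'] at hp
    have : (4 : ℝ) * p.2 ≤ p.1 := by linarith
    exact_mod_cast this
  refine ⟨by filter_upwards [h4, hm0] with p hp h0; omega, ?_⟩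
  have hN : Tendsto (fun p : ℕ × ℕ => 2 * p.1 + p.2) F atTop :=
    tendsto_atTop_mono (fun p => by omega) hm
  have hb : Tendsto (fun p : ℕ × ℕ => p.1 + 2 * p.2) F atTop :=
    tendsto_atTop_mono (fun p => by omega) hm
  have ha : Tendsto (fun p : ℕ × ℕ => p.1 - p.2) F atTop := by
    refine tendsto_atTop.2 fun n => ?_
    filter_upwards [h4, hm.eventually_ge_atTop (2 * n)] with p hp hn
    omega
  have hs : Tendsto (fun n => Real.log (Stirling.stirlingSeq n)) atTop
      (𝓝 (Real.log (Real.sqrt Real.pi))) :=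
    Stirling.tendsto_stirlingSeq_sqrt_pi.log (Real.sqrt_pos.2 Real.pi_pos).ne'
  have t1 := (((hs.comp hN).sub (hs.comp ha)).sub (hs.comp hb)).add_const
    (Real.log (Real.sqrt Real.pi))
  have l1 : Tendsto (fun p : ℕ × ℕ => Real.log (1 + (p.2 / p.1 : ℝ) / 2)) F (𝓝 0) := by
    simpa using ((hx.div_const 2).const_add 1).log (by norm_num)
  have l2 : Tendsto (fun p : ℕ × ℕ => Real.log (1 + -(p.2 / p.1 : ℝ))) F (𝓝 0) := by
    simpa using (hx.neg.const_add 1).log (by norm_num)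
  have l3 : Tendsto (fun p : ℕ × ℕ => Real.log (1 + 2 * (p.2 / p.1 : ℝ))) F (𝓝 0) := by
    simpa using ((hx.const_mul 2).const_add 1).log (by norm_num)
  have l4 : Tendsto (fun p : ℕ × ℕ => Real.log (1 + -(p.2 / p.1 : ℝ) + 1 / (p.1 : ℝ))) F
      (𝓝 0) := by
    simpa using ((hx.neg.const_add 1).add hinv).log (by norm_num)
  have t2 := (((l1.const_mul (-(1 / 2))).sub (l2.const_mul (1 / 2))).sub
    (l3.const_mul (1 / 2))).sub l4
  have t3 : Tendsto (fun p : ℕ × ℕ =>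
      (p.1 : ℝ) * (2 * ((1 + (p.2 / p.1 : ℝ) / 2) * Real.log (1 + (p.2 / p.1 : ℝ) / 2))
      - (1 + -(p.2 / p.1 : ℝ)) * Real.log (1 + -(p.2 / p.1 : ℝ))
      - (1 + 2 * (p.2 / p.1 : ℝ)) * Real.log (1 + 2 * (p.2 / p.1 : ℝ))
      + 9 / 4 * (p.2 / p.1 : ℝ) ^ 2)) F (𝓝 0) := by
    refine squeeze_zero_norm' ?_ (by simpa using hx.const_mul (37 * C))
    filter_upwards [hsmall, hC, hm0] with p hp hpC h0
    have h0' : (0 : ℝ) < p.1 := by exact_mod_cast h0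
    have hmx : (p.1 : ℝ) * (p.2 / p.1 : ℝ) ^ 2 ≤ C := by
      refine le_of_eq_of_le ?_ hpC
      field_simp
    have hx0 : (0 : ℝ) ≤ (p.2 / p.1 : ℝ) := by positivity
    change _ ≤ 37 * C * (p.2 / p.1 : ℝ)
    generalize (p.2 / p.1 : ℝ) = x at *
    have b1 := abs_entropy_sub_le (u := x / 2) (by rw [abs_of_nonneg] <;> linarith)
    have b2 := abs_entropy_sub_le (u := -x) (by rw [abs_neg, abs_of_nonneg] <;> linarith)
    have b3 := abs_entropy_sub_le (u := 2 * x) (by rw [abs_of_nonneg] <;> linarith)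
    rw [abs_of_nonneg (by positivity : 0 ≤ x / 2)] at b1
    rw [abs_neg, abs_of_nonneg hx0] at b2
    rw [abs_of_nonneg (by positivity : 0 ≤ 2 * x)] at b3
    rw [Real.norm_eq_abs, abs_mul, abs_of_pos h0']
    rw [abs_le] at b1 b2 b3
    -- The linear terms of the three entropies cancel, and the quadratic ones sum to `-9 x² / 4`;
    -- the cubic remainders contribute `4 (2 / 8 + 1 + 8) = 37`.
    calc _ ≤ (p.1 : ℝ) * (37 * x ^ 3) := by
          gcongr
          rw [abs_le]
          constructor <;> nlinarith [b1.1, b1.2, b2.1, b2.2, b3.1, b3.2]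
      _ = 37 * ((p.1 : ℝ) * x ^ 2) * x := by ring
      _ ≤ 37 * C * x := by gcongr
  simpa [logError, Function.comp_def] using (t1.add t2).add t3

/-- Stirling asymptotics for the bulk factor of the Bouttier–Guitter counting formula:
as `m, ℓ → ∞` with `ℓ²/m` staying in a compact subset of `(0,∞)`,
`(2m+ℓ-1)! / ((m-ℓ+1)! (m+2ℓ)!) ∼ (1/(2√π)) · 4^m · 2^ℓ · m^{-5/2} · exp(-9ℓ²/(4m))`,
uniformly (here `m - ℓ + 1` is written as the natural number `m + 1 - ℓ`, which agrees
with it when `m - ℓ + 1 ≥ 0`, i.e. `ℓ ≤ m + 1`). -/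
theorem bulk_factor_asymptotics (K : Set ℝ) (hK : IsCompact K) (hK' : K ⊆ Set.Ioi 0)
    {η : ℝ} (hη : 0 < η) :
    ∃ M : ℕ, ∀ m ℓ : ℕ, M ≤ m → 1 ≤ ℓ → (ℓ:ℝ)^2 / m ∈ K →
      ℓ ≤ m + 1 ∧
      |(((Nat.factorial (2*m + ℓ - 1)) : ℝ)
            / ((Nat.factorial (m + 1 - ℓ)) * (Nat.factorial (m + 2*ℓ))))
          / ((1 / (2 * Real.sqrt Real.pi)) * (4:ℝ)^m * (2:ℝ)^ℓ *
              (m:ℝ) ^ (-(5:ℝ)/2) * Real.exp (-(9 * (ℓ:ℝ)^2) / (4*m)))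
        - 1| ≤ η := by
  obtain ⟨C, hC⟩ := hK.bddAbove
  set S : Set (ℕ × ℕ) := {p | 1 ≤ p.2 ∧ (p.2 : ℝ) ^ 2 / p.1 ∈ K} with hS
  set F : Filter (ℕ × ℕ) := comap Prod.fst atTop ⊓ 𝓟 S with hF
  have hSF : ∀ᶠ p in F, p ∈ S := mem_inf_of_right (mem_principal_self S)
  obtain ⟨hlt, hlim⟩ := tendsto_logError (F := F) (C := C)
    (tendsto_comap.mono_left inf_le_left) (hSF.mono fun p hp => hC hp.2)
  have hexp : ∀ᶠ p : ℕ × ℕ in F, |Real.exp (logError p.1 p.2) - 1| < η := by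
    have h := (Real.continuous_exp.tendsto 0).comp hlim
    rw [Real.exp_zero] at h
    exact (Metric.tendsto_nhds.1 h η hη).mono fun p hp => by simpa [Real.dist_eq] using hp
  have hall := hlt.and hexp
  rw [hF, eventually_inf_principal, eventually_comap, eventually_atTop] at hall
  obtain ⟨M, hM⟩ := hall
  refine ⟨M, fun m ℓ hMm hl hmem => ?_⟩
  obtain ⟨h1, h2⟩ := hM m hMm (m, ℓ) rfl ⟨hl, hmem⟩
  refine ⟨(Nat.lt_succ_of_lt h1).le, ?_⟩
  rw [bulk_ratio_eq_exp hl h1]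
  exact h2.le
end
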